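/- arXiv:math/0701896 — 2 statements merged into one kernel-verified Lean document; each statement's English description precedes it below -/
import Mathlib

section
/- Let f : D → ℝ⁴ be a branched disc of order N at 0. Then there exists δ ∈ (0,1) such that for every z ∈ D with 0 < |z| ≤ δ one has ⟨f(z), df_z(z)⟩ > 0, where df_z denotes the Fréchet derivative of f at z applied to the vector z ∈ ℂ ≅ ℝ²; equivalently, the directional derivative of z ↦ ‖f(z)‖² at z in the radial direction z is strictly positive. In particular, for each fixed θ the function r ↦ ‖f(r e^{iθ})‖ is strictly increasing on (0, δ]. -/
open Complex Filter Asymptotics Metric Topology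

/-- `f : ℂ → ℝ⁴` (defined on the open unit disc) is a *branched disc of order `N` at `0`*:
`f` is `C¹` on the unit disc, `f 0 = 0`, and as `z → 0`,
`f¹(z) = Re(z^N) + o(|z|^N)`, `f²(z) = Im(z^N) + o(|z|^N)`, `f³, f⁴ = o(|z|^N)`,
with the first-order derivatives of the corresponding differences being `o(|z|^{N-1})`. -/
structure IsBranchedDisc (f : ℂ → EuclideanSpace ℝ (Fin 4)) (N : ℕ) : Prop where
  two_le : 2 ≤ N
  contDiffOn : ContDiffOn ℝ 1 f (ball (0 : ℂ) 1)
  map_zero : f 0 = 0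
  comp1 : (fun z : ℂ => f z 0 - (z ^ N).re) =o[𝓝 (0 : ℂ)] fun z => ‖z‖ ^ N
  comp2 : (fun z : ℂ => f z 1 - (z ^ N).im) =o[𝓝 (0 : ℂ)] fun z => ‖z‖ ^ N
  comp3 : (fun z : ℂ => f z 2) =o[𝓝 (0 : ℂ)] fun z => ‖z‖ ^ N
  comp4 : (fun z : ℂ => f z 3) =o[𝓝 (0 : ℂ)] fun z => ‖z‖ ^ N
  deriv1 : (fun z : ℂ => fderiv ℝ (fun w : ℂ => f w 0 - (w ^ N).re) z)
      =o[𝓝 (0 : ℂ)] fun z => ‖z‖ ^ (N - 1)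
  deriv2 : (fun z : ℂ => fderiv ℝ (fun w : ℂ => f w 1 - (w ^ N).im) z)
      =o[𝓝 (0 : ℂ)] fun z => ‖z‖ ^ (N - 1)
  deriv3 : (fun z : ℂ => fderiv ℝ (fun w : ℂ => f w 2) z)
      =o[𝓝 (0 : ℂ)] fun z => ‖z‖ ^ (N - 1)
  deriv4 : (fun z : ℂ => fderiv ℝ (fun w : ℂ => f w 3) z)
      =o[𝓝 (0 : ℂ)] fun z => ‖z‖ ^ (N - 1)

/-!
A branched disc is asymptotic to its leading part `p(z) = (Re z^N, Im z^N, 0, 0)`, and by Euler's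
identity `dp_z(z) = N p(z)` its radial derivative `df_z(z)` is asymptotic to `N p(z)`. Two vectors
asymptotic to positive multiples of the same nonzero vector have positive inner product; here
`⟨f(z), df_z(z)⟩ ~ N |z|^{2N}`. Along a ray, this inner product is a positive multiple of the
derivative of `‖f‖²`.
-/

theorem exists_pos_lt_forall_norm_le_of_eventually {E : Type*} [NormedAddCommGroup E]
    {P : E → Prop} (hP : ∀ᶠ x in 𝓝[≠] 0, P x) {R : ℝ} (hR : 0 < R) :
    ∃ δ : ℝ, 0 < δ ∧ δ < R ∧ ∀ x : E, 0 < ‖x‖ → ‖x‖ ≤ δ → P x := by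
  obtain ⟨ε, hε, hball⟩ := nhds_basis_closedBall.eventually_iff.1 (eventually_nhdsWithin_iff.1 hP)
  refine ⟨min ε (R / 2), by positivity, (min_le_right _ _).trans_lt (half_lt_self hR), ?_⟩
  exact fun x hx hxδ =>
    hball (mem_closedBall_zero_iff.2 (hxδ.trans (min_le_left _ _))) (norm_pos_iff.1 hx)

section Asymptotics

variable {α : Type*} {l : Filter α}

theorem isLittleO_piLp {ι : Type*} [Fintype ι] {q : ENNReal} [Fact (1 ≤ q)] {E : ι → Type*}
    [∀ i, NormedAddCommGroup (E i)] {G : Type*} [NormedAddCommGroup G]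
    {u : α → PiLp q E} {g : α → G} :
    u =o[l] g ↔ ∀ i, (fun a => u a i) =o[l] g := by
  have equiv_pi : (fun a => WithLp.ofLp (u a)) =Θ[l] u :=
    ⟨.of_bound 1 <| .of_forall fun a => by
      simpa using (PiLp.lipschitzWith_ofLp q E).norm_sub_le (u a) 0,
    .of_bound _ <| .of_forall fun a =>
      (PiLp.antilipschitzWith_ofLp q E).le_mul_norm (WithLp.ofLp_zero q) (u a)⟩
  rw [← equiv_pi.isLittleO_congr_left, isLittleO_pi]

variable {F : Type*} [NormedAddCommGroup F] [InnerProductSpace ℝ F]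

theorem isBigO_inner (u v : α → F) :
    (fun a => inner ℝ (u a) (v a)) =O[l] fun a => ‖u a‖ * ‖v a‖ :=
  .of_bound 1 <| .of_forall fun a => by
    simpa using abs_real_inner_le_norm (u a) (v a)

theorem isEquivalent_inner_of_isEquivalent_smul {u v p : α → F} {c : ℝ} (hc : c ≠ 0)
    (hu : u ~[l] p) (hv : v ~[l] fun a => c • p a) :
    (fun a => inner ℝ (u a) (v a)) ~[l] fun a => c * ‖p a‖ ^ 2 := by
  have hv_sub : (fun a => v a - c • p a) =o[l] p := (isLittleO_const_smul_right hc).1 hv.isLittleO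
  have hv_bigO : v =O[l] p := hv.isBigO.trans ((isBigO_refl p l).const_smul_left c)
  have left : (fun a => inner ℝ (u a - p a) (v a)) =o[l] fun a => ‖p a‖ * ‖p a‖ :=
    (isBigO_inner _ _).trans_isLittleO (hu.isLittleO.norm_norm.mul_isBigO hv_bigO.norm_norm)
  have right : (fun a => inner ℝ (p a) (v a - c • p a)) =o[l] fun a => ‖p a‖ * ‖p a‖ :=
    (isBigO_inner _ _).trans_isLittleO ((isBigO_refl _ _).mul_isLittleO hv_sub.norm_norm)
  refine IsLittleO.isEquivalent ((isLittleO_const_mul_right_iff hc).2 ?_)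
  refine (left.add right).congr (fun a => ?_) (fun a => (sq _).symm)
  rw [inner_sub_left, inner_sub_right, real_inner_smul_right, real_inner_self_eq_norm_sq,
    Pi.sub_apply]
  ring

theorem eventually_inner_pos_of_isEquivalent_smul {u v p : α → F} {c : ℝ} (hc : 0 < c)
    (hp : ∀ᶠ a in l, p a ≠ 0) (hu : u ~[l] p) (hv : v ~[l] fun a => c • p a) :
    ∀ᶠ a in l, 0 < inner ℝ (u a) (v a) := by
  apply (isEquivalent_inner_of_isEquivalent_smul hc.ne' hu hv).eventually_pos
  filter_upwards [hp] with a ha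
  positivity

end Asymptotics

section RadialDerivative

variable {𝕜 E F : Type*} [NontriviallyNormedField 𝕜] [NormedAddCommGroup E] [NormedSpace 𝕜 E]
  [NormedAddCommGroup F] [NormedSpace 𝕜 F]

theorem isLittleO_clm_apply_self {L : E → E →L[𝕜] F} {l : Filter E} {n : ℕ}
    (hL : L =o[l] fun x => ‖x‖ ^ n) :
    (fun x => L x x) =o[l] fun x => ‖x‖ ^ (n + 1) := by
  have bound : (fun x => L x x) =O[l] fun x => ‖L x‖ * ‖x‖ :=
    .of_bound 1 <| .of_forall fun x => by simpa using (L x).le_opNorm x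
  simpa only [pow_succ] using bound.trans_isLittleO (hL.norm_left.mul_isBigO (isBigO_refl _ _))

theorem fderiv_apply_self_of_homogeneous {p : E → F} {n : ℕ} {x : E}
    (hp : DifferentiableAt 𝕜 p x) (hom : ∀ᶠ t : 𝕜 in 𝓝 1, p (t • x) = t ^ n • p x) :
    fderiv 𝕜 p x x = (n : 𝕜) • p x := by
  have ray : HasDerivAt (fun t : 𝕜 => t • x) x 1 := by
    simpa using (hasDerivAt_id (1 : 𝕜)).smul_const x
  have along_ray : HasDerivAt (fun t : 𝕜 => p (t • x)) (fderiv 𝕜 p x x) 1 :=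
    HasFDerivAt.comp_hasDerivAt 1 (by simpa using hp.hasFDerivAt) ray
  have power : HasDerivAt (fun t : 𝕜 => t ^ n • p x) ((n : 𝕜) • p x) 1 := by
    simpa using (hasDerivAt_pow n (1 : 𝕜)).smul_const (p x)
  exact along_ray.unique (power.congr_of_eventuallyEq hom)

end RadialDerivative

section RadialMonotonicity

variable {E F : Type*} [NormedAddCommGroup E] [NormedSpace ℝ E]
  [NormedAddCommGroup F] [InnerProductSpace ℝ F] {f : E → F} {f' : E → E →L[ℝ] F}

theorem strictMonoOn_norm_smul_of_inner_pos {u : E} {s : Set ℝ} (hs : Convex ℝ s)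
    (hs_pos : ∀ r ∈ s, 0 < r) (hf : ∀ r ∈ s, HasFDerivAt f (f' (r • u)) (r • u))
    (hinner : ∀ r ∈ s, 0 < inner ℝ (f (r • u)) (f' (r • u) (r • u))) :
    StrictMonoOn (fun r : ℝ => ‖f (r • u)‖) s := by
  have hderiv : ∀ r ∈ s, HasDerivAt (fun r : ℝ => ‖f (r • u)‖ ^ 2)
      (2 * inner ℝ (f (r • u)) (f' (r • u) u)) r := fun r hr =>
    have ray : HasDerivAt (fun t : ℝ => t • u) u r := by
      simpa using (hasDerivAt_id r).smul_const u
    ((hf r hr).comp_hasDerivAt r ray).norm_sq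
  have hderiv_pos : ∀ r ∈ s, 0 < 2 * inner ℝ (f (r • u)) (f' (r • u) u) := fun r hr => by
    have h := hinner r hr
    rw [map_smul, real_inner_smul_right] at h
    exact mul_pos two_pos (pos_of_mul_pos_right h (hs_pos r hr).le)
  have hsq : StrictMonoOn (fun r : ℝ => ‖f (r • u)‖ ^ 2) s :=
    strictMonoOn_of_hasDerivWithinAt_pos hs
      (fun r hr => (hderiv r hr).continuousAt.continuousWithinAt)
      (fun r hr => (hderiv r (interior_subset hr)).hasDerivWithinAt)
      (fun r hr => hderiv_pos r (interior_subset hr))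
  exact fun r hr t ht hrt => lt_of_pow_lt_pow_left₀ 2 (norm_nonneg _) (hsq hr ht hrt)

theorem branchedDisc_radial_derivative_pos_general {p : E → F} {c : ℝ} (hc : 0 < c)
    (hf' : ∀ᶠ x in 𝓝[≠] 0, HasFDerivAt f (f' x) x) (hp : ∀ᶠ x in 𝓝[≠] 0, p x ≠ 0)
    (hfp : f ~[𝓝[≠] 0] p) (hf'p : (fun x => f' x x) ~[𝓝[≠] 0] fun x => c • p x) :
    ∃ δ : ℝ, 0 < δ ∧ δ < 1 ∧
      (∀ x : E, 0 < ‖x‖ → ‖x‖ ≤ δ → 0 < inner ℝ (f x) (f' x x)) ∧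
      ∀ u : E, ‖u‖ = 1 → StrictMonoOn (fun r : ℝ => ‖f (r • u)‖) (Set.Ioc 0 δ) := by
  have hinner := eventually_inner_pos_of_isEquivalent_smul hc hp hfp hf'p
  obtain ⟨δ, hδ_pos, hδ_lt, hδ⟩ :=
    exists_pos_lt_forall_norm_le_of_eventually (hf'.and hinner) one_pos
  refine ⟨δ, hδ_pos, hδ_lt, fun x hx hxδ => (hδ x hx hxδ).2, fun u hu => ?_⟩
  have hray : ∀ r ∈ Set.Ioc 0 δ, HasFDerivAt f (f' (r • u)) (r • u) ∧
      0 < inner ℝ (f (r • u)) (f' (r • u) (r • u)) := fun r hr => by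
    have hnorm : ‖r • u‖ = r := by rw [norm_smul, hu, mul_one, Real.norm_of_nonneg hr.1.le]
    exact hδ (r • u) (hnorm.symm ▸ hr.1) (hnorm.symm ▸ hr.2)
  exact strictMonoOn_norm_smul_of_inner_pos (convex_Ioc _ _) (fun r hr => hr.1)
    (fun r hr => (hray r hr).1) (fun r hr => (hray r hr).2)

end RadialMonotonicity

/-- The leading part `(Re z^N, Im z^N, 0, 0)` of a branched disc of order `N`: the map `z ↦ z ^ N`
followed by the inclusion of `ℂ` in `ℝ⁴` as the first two coordinates. -/
noncomputable def branchedLeadingPart (N : ℕ) (z : ℂ) : EuclideanSpace ℝ (Fin 4) :=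
  !₂[(z ^ N).re, (z ^ N).im, 0, 0]

namespace branchedLeadingPart

variable (N : ℕ)

theorem norm_eq (z : ℂ) : ‖branchedLeadingPart N z‖ = ‖z‖ ^ N := by
  rw [← norm_pow, EuclideanSpace.norm_eq, Complex.norm_def, Complex.normSq_apply]
  simp [branchedLeadingPart, Fin.sum_univ_four, ← sq]

theorem eventually_ne_zero : ∀ᶠ z in 𝓝[≠] 0, branchedLeadingPart N z ≠ 0 := by
  filter_upwards [self_mem_nhdsWithin] with z hz
  rw [← norm_ne_zero_iff, norm_eq]
  exact pow_ne_zero N (norm_ne_zero_iff.2 hz)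

theorem differentiable : Differentiable ℝ (branchedLeadingPart N) := by
  have hpow : Differentiable ℝ fun z : ℂ => z ^ N := by fun_prop
  rw [differentiable_euclidean]
  intro i
  fin_cases i
  · exact Complex.reCLM.differentiable.comp hpow
  · exact Complex.imCLM.differentiable.comp hpow
  · exact differentiable_const 0
  · exact differentiable_const 0

theorem map_real_smul (t : ℝ) (z : ℂ) :
    branchedLeadingPart N (t • z) = t ^ N • branchedLeadingPart N z := by
  have hpow : (t • z) ^ N = t ^ N • z ^ N := smul_pow t z N
  ext i
  fin_cases i <;>
    simp [branchedLeadingPart, hpow, Complex.smul_re, Complex.smul_im, -Complex.real_smul]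

theorem fderiv_apply_self (z : ℂ) :
    fderiv ℝ (branchedLeadingPart N) z z = (N : ℝ) • branchedLeadingPart N z :=
  fderiv_apply_self_of_homogeneous (differentiable N z) <|
    .of_forall fun t => map_real_smul N t z

end branchedLeadingPart

namespace IsBranchedDisc

variable {f : ℂ → EuclideanSpace ℝ (Fin 4)} {N : ℕ}

theorem eventually_differentiableAt (hf : IsBranchedDisc f N) :
    ∀ᶠ z in 𝓝 0, DifferentiableAt ℝ f z :=
  (hf.contDiffOn.differentiableOn one_ne_zero).eventually_differentiableAt
    (ball_mem_nhds 0 one_pos)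

theorem sub_leadingPart_isLittleO (hf : IsBranchedDisc f N) :
    (f - branchedLeadingPart N) =o[𝓝 0] fun z => ‖z‖ ^ N := by
  rw [isLittleO_piLp]
  simpa [Fin.forall_fin_succ, branchedLeadingPart] using
    ⟨hf.comp1, hf.comp2, hf.comp3, hf.comp4⟩

theorem fderiv_coord_sub_leadingPart_isLittleO (hf : IsBranchedDisc f N) (i : Fin 4) :
    (fun z => fderiv ℝ (fun w => f w i - branchedLeadingPart N w i) z) =o[𝓝 0]
      fun z => ‖z‖ ^ (N - 1) := by
  fin_cases i
  · simpa [branchedLeadingPart] using hf.deriv1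
  · simpa [branchedLeadingPart] using hf.deriv2
  · simpa [branchedLeadingPart] using hf.deriv3
  · simpa [branchedLeadingPart] using hf.deriv4

theorem fderiv_apply_self_sub_smul_leadingPart_isLittleO (hf : IsBranchedDisc f N) :
    (fun z => fderiv ℝ f z z - (N : ℝ) • branchedLeadingPart N z) =o[𝓝 0]
      fun z => ‖z‖ ^ N := by
  have hN : N - 1 + 1 = N := Nat.sub_add_cancel (one_le_two.trans hf.two_le)
  rw [isLittleO_piLp]
  intro i
  have hcoord := isLittleO_clm_apply_self (hf.fderiv_coord_sub_leadingPart_isLittleO i)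
  rw [hN] at hcoord
  refine hcoord.congr' ?_ .rfl
  filter_upwards [hf.eventually_differentiableAt] with z hz
  have hdiff := hz.hasFDerivAt.sub (branchedLeadingPart.differentiable N z).hasFDerivAt
  have hproj := (EuclideanSpace.proj (𝕜 := ℝ) i).hasFDerivAt.comp z hdiff
  rw [← branchedLeadingPart.fderiv_apply_self]
  exact congrArg (· z) hproj.fderiv

theorem isEquivalent_leadingPart (hf : IsBranchedDisc f N) :
    f ~[𝓝 0] branchedLeadingPart N := by
  refine IsLittleO.isEquivalent (.of_norm_right ?_)
  simpa only [branchedLeadingPart.norm_eq] using hf.sub_leadingPart_isLittleO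

theorem fderiv_apply_self_isEquivalent_smul_leadingPart (hf : IsBranchedDisc f N) :
    (fun z => fderiv ℝ f z z) ~[𝓝 0] fun z => (N : ℝ) • branchedLeadingPart N z := by
  have hN : (N : ℝ) ≠ 0 := Nat.cast_ne_zero.2 (two_pos.trans_le hf.two_le).ne'
  refine IsLittleO.isEquivalent ((isLittleO_const_smul_right hN).2 (.of_norm_right ?_))
  simp only [branchedLeadingPart.norm_eq]
  exact hf.fderiv_apply_self_sub_smul_leadingPart_isLittleO

end IsBranchedDisc

/-- For a branched disc `f` of order `N` at `0`, there is `δ ∈ (0,1)` such that for all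
`z` with `0 < |z| ≤ δ` the radial derivative of `‖f‖²` is positive: `⟨f(z), df_z(z)⟩ > 0`.
In particular, for each `θ` the function `r ↦ ‖f (r e^{iθ})‖` is strictly increasing
on `(0, δ]`. -/
theorem branchedDisc_radial_derivative_pos
    (f : ℂ → EuclideanSpace ℝ (Fin 4)) (N : ℕ) (hf : IsBranchedDisc f N) :
    ∃ δ : ℝ, 0 < δ ∧ δ < 1 ∧
      (∀ z : ℂ, 0 < ‖z‖ → ‖z‖ ≤ δ → 0 < inner (f z) (fderiv ℝ f z z : EuclideanSpace ℝ (Fin 4)) (𝕜 := ℝ)) ∧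
      ∀ θ : ℝ, StrictMonoOn
        (fun r : ℝ => ‖f ((r : ℂ) * Complex.exp (θ * Complex.I))‖) (Set.Ioc 0 δ) := by
  have hN : (0 : ℝ) < N := Nat.cast_pos.2 (two_pos.trans_le hf.two_le)
  obtain ⟨δ, hδ_pos, hδ_lt, hinner, hmono⟩ :=
    branchedDisc_radial_derivative_pos_general hN
      (nhdsWithin_le_nhds (hf.eventually_differentiableAt.mono fun _ h => h.hasFDerivAt))
      (branchedLeadingPart.eventually_ne_zero N)
      (hf.isEquivalent_leadingPart.mono nhdsWithin_le_nhds)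
      (hf.fderiv_apply_self_isEquivalent_smul_leadingPart.mono nhdsWithin_le_nhds)
  exact ⟨δ, hδ_pos, hδ_lt, hinner, fun θ => by
    simpa only [Complex.real_smul] using hmono (exp (θ * I)) (norm_exp_ofReal_mul_I θ)⟩
end

section
/- Let ε₀ > 0, let a : ℕ → (0,ε₀) → ℝ and b : (0,ε₀) → ℝ, and let μ ∈ ℝ. Assume: (i) for all ε, ε′ with 0 < ε′ < ε < ε₀, lim_{n→∞} (aₙ(ε) − aₙ(ε′)) = b(ε) − b(ε′); and (ii) b(ε) → 0 as ε → 0⁺. Then the following two assertions are equivalent: (1) there exists a sequence (ε_s) in (0,ε₀) with ε_s → 0 such that for every s the limit μ⁽ˢ⁾ := lim_{n→∞} aₙ(ε_s) exists and is finite, and lim_{s→∞} μ⁽ˢ⁾ = μ; (2) for every ε ∈ (0, ε₀), lim_{n→∞} aₙ(ε) = b(ε) + μ. -/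
open Filter Topology

/-!
Hypothesis (i) says that the limit of `a n x`, once known at one point `y`, is known at every
point `x`: it is `b x - b y + lim a n y`. Applying this to `y = ε_s` exhibits
`b ε - b (ε_s) + μ⁽ˢ⁾` as a limit of `a n ε` for every `s`; these numbers converge to `b ε + μ`,
which is therefore again a limit of `a n ε`, because the limits of a function along a filter form
a closed set.
-/

section

variable {ι κ α X G : Type*} {l : Filter ι}

theorem isClosed_setOfPred_tendsto_nhds [TopologicalSpace X] (f : ι → X) (l : Filter ι) :
    IsClosed {y | Tendsto f l (𝓝 y)} := by
  refine isClosed_of_closure_subset fun y hy U hU => ?_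
  obtain ⟨z, hzU, hz⟩ :=
    mem_closure_iff.1 hy (interior U) isOpen_interior (mem_interior_iff_mem_nhds.2 hU)
  exact hz (mem_interior_iff_mem_nhds.1 hzU)

variable [AddGroup G] [TopologicalSpace G]

theorem tendsto_add_of_tendsto_sub_of_tendsto [ContinuousAdd G] {p : Filter κ} [p.NeBot]
    {f : ι → G} {g : κ → ι → G} {d m : κ → G} {D M : G}
    (hsub : ∀ s, Tendsto (fun n => f n - g s n) l (𝓝 (d s)))
    (hg : ∀ s, Tendsto (g s) l (𝓝 (m s)))
    (hd : Tendsto d p (𝓝 D)) (hm : Tendsto m p (𝓝 M)) :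
    Tendsto f l (𝓝 (D + M)) := by
  have hf (s : κ) : Tendsto f l (𝓝 (d s + m s)) := by
    simpa only [sub_add_cancel] using (hsub s).add (hg s)
  exact (isClosed_setOfPred_tendsto_nhds f l).mem_of_tendsto (hd.add hm) (Eventually.of_forall hf)

theorem tendsto_sub_of_forall_lt [ContinuousNeg G] [LinearOrder α] {S : Set α}
    {a : ι → α → G} {b : α → G}
    (h : ∀ x ∈ S, ∀ y ∈ S, y < x → Tendsto (fun n => a n x - a n y) l (𝓝 (b x - b y)))
    {x y : α} (hx : x ∈ S) (hy : y ∈ S) :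
    Tendsto (fun n => a n x - a n y) l (𝓝 (b x - b y)) := by
  rcases lt_trichotomy x y with hxy | rfl | hyx
  · simpa only [neg_sub] using (h y hy x hx hxy).neg
  · simpa only [sub_self] using tendsto_const_nhds
  · exact h x hx y hy hyx

theorem double_limit_criterion_general [IsTopologicalAddGroup G] [TopologicalSpace α]
    [FrechetUrysohnSpace α] {S : Set α} {x₀ : α} (hx₀ : x₀ ∈ closure S)
    {a : ι → α → G} {b : α → G} {μ : G}
    (hsub : ∀ x ∈ S, ∀ y ∈ S, Tendsto (fun n => a n x - a n y) l (𝓝 (b x - b y)))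
    (hb : Tendsto b (𝓝[S] x₀) (𝓝 0)) :
    (∃ xs : ℕ → α, (∀ s, xs s ∈ S) ∧ Tendsto xs atTop (𝓝 x₀) ∧
        ∃ μs : ℕ → G, (∀ s, Tendsto (fun n => a n (xs s)) l (𝓝 (μs s))) ∧
          Tendsto μs atTop (𝓝 μ))
      ↔ ∀ x ∈ S, Tendsto (fun n => a n x) l (𝓝 (b x + μ)) := by
  have hb_seq {xs : ℕ → α} (hxs : ∀ s, xs s ∈ S) (hlim : Tendsto xs atTop (𝓝 x₀)) :
      Tendsto (fun s => b (xs s)) atTop (𝓝 0) :=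
    hb.comp (tendsto_nhdsWithin_iff.2 ⟨hlim, Eventually.of_forall hxs⟩)
  constructor
  · rintro ⟨xs, hxs, hlim, μs, ha, hμs⟩ x hx
    have hdiff : Tendsto (fun s => b x - b (xs s)) atTop (𝓝 (b x)) := by
      simpa only [sub_zero] using (hb_seq hxs hlim).const_sub (b x)
    exact tendsto_add_of_tendsto_sub_of_tendsto (fun s => hsub x hx (xs s) (hxs s)) ha hdiff hμs
  · intro ha
    obtain ⟨xs, hxs, hlim⟩ := mem_closure_iff_seq_limit.1 hx₀
    have hμs : Tendsto (fun s => b (xs s) + μ) atTop (𝓝 μ) := by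
      simpa only [zero_add] using (hb_seq hxs hlim).add_const μ
    exact ⟨xs, hxs, hlim, fun s => b (xs s) + μ, fun s => ha (xs s) (hxs s), hμs⟩

end

/-- Abstract content of Lemma 3 of the paper. Let `a n ε` (for `ε ∈ (0, ε₀)`) and `b ε`
be real numbers such that (i) for `0 < ε' < ε < ε₀`, `aₙ(ε) − aₙ(ε′) → b(ε) − b(ε′)` as
`n → ∞`, and (ii) `b(ε) → 0` as `ε → 0⁺`. Then the following are equivalent:
(1) there is a sequence `ε_s → 0` in `(0, ε₀)` such that each limit
`μ⁽ˢ⁾ = lim_n aₙ(ε_s)` exists and `μ⁽ˢ⁾ → μ`;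
(2) for every `ε ∈ (0, ε₀)`, `lim_n aₙ(ε) = b(ε) + μ`. -/
theorem double_limit_criterion
    (ε₀ : ℝ) (hε₀ : 0 < ε₀) (a : ℕ → ℝ → ℝ) (b : ℝ → ℝ) (μ : ℝ)
    (hi : ∀ ε ε' : ℝ, 0 < ε' → ε' < ε → ε < ε₀ →
      Tendsto (fun n => a n ε - a n ε') atTop (𝓝 (b ε - b ε')))
    (hb : Tendsto b (𝓝[>] (0 : ℝ)) (𝓝 0)) :
    (∃ εs : ℕ → ℝ, (∀ s, εs s ∈ Set.Ioo 0 ε₀) ∧ Tendsto εs atTop (𝓝 0) ∧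
        ∃ μs : ℕ → ℝ, (∀ s, Tendsto (fun n => a n (εs s)) atTop (𝓝 (μs s))) ∧
          Tendsto μs atTop (𝓝 μ))
      ↔ (∀ ε ∈ Set.Ioo 0 ε₀, Tendsto (fun n => a n ε) atTop (𝓝 (b ε + μ))) :=
  double_limit_criterion_general
    (by simp only [closure_Ioo hε₀.ne, Set.left_mem_Icc, hε₀.le])
    (fun _ hx _ hy => tendsto_sub_of_forall_lt
      (fun ε hε ε' hε' hlt => hi ε ε' hε'.1 hlt hε.2) hx hy)
    (hb.mono_left (nhdsWithin_mono 0 Set.Ioo_subset_Ioi_self))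
end
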